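/- For integers p ≥ 0, k ≥ 0, m > 0, n > 0, the integral W^{p,k}_{0,m,n} = ∫_{S²} Y_{p,0} Y_{k,m} Y_{k,n} dS equals δ_{m,n} C_{p,k} (−1)^m (p k k; 0 0 0)(p k k; 0 m −m), where C_{p,k} = (2k+1)√(2p+1)/√(4π) and (ℓ₁ ℓ₂ ℓ₃; m₁ m₂ m₃) denotes the Wigner 3-j symbol. -/

import Mathlib

open scoped Real

noncomputable section

/-- Factorial extended to integers: zero for negative arguments. -/
def fact' (z : ℤ) : ℝ := if z < 0 then 0 else (Nat.factorial z.toNat : ℝ)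

/-- The Wigner 3-j symbol, defined via the Racah formula. -/
def w3j (l1 l2 l3 : ℕ) (m1 m2 m3 : ℤ) : ℝ :=
  if m1 + m2 + m3 = 0 ∧ |m1| ≤ (l1 : ℤ) ∧ |m2| ≤ (l2 : ℤ) ∧ |m3| ≤ (l3 : ℤ) ∧
      (l3 : ℤ) ≤ (l1 : ℤ) + (l2 : ℤ) ∧ |(l1 : ℤ) - (l2 : ℤ)| ≤ (l3 : ℤ) then
    (-1 : ℝ) ^ ((l1 : ℤ) - (l2 : ℤ) - m3) *
      Real.sqrt ((fact' ((l1 : ℤ) + l2 - l3) * fact' ((l1 : ℤ) - l2 + l3) *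
          fact' (-(l1 : ℤ) + l2 + l3) * fact' ((l1 : ℤ) - m1) * fact' ((l1 : ℤ) + m1) *
          fact' ((l2 : ℤ) - m2) * fact' ((l2 : ℤ) + m2) * fact' ((l3 : ℤ) - m3) *
          fact' ((l3 : ℤ) + m3)) / fact' ((l1 : ℤ) + l2 + l3 + 1)) *
      ∑ t ∈ Finset.range (l1 + l2 + l3 + 1),
        (-1 : ℝ) ^ t /
          (fact' t * fact' ((l3 : ℤ) - l2 + m1 + t) * fact' ((l3 : ℤ) - l1 - m2 + t) *
            fact' ((l1 : ℤ) + l2 - l3 - t) * fact' ((l1 : ℤ) - m1 - t) *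
            fact' ((l2 : ℤ) + m2 - t))
  else 0

/-- Associated Legendre function via the Rodrigues formula. -/
def assocLegendre (l : ℕ) (m : ℤ) (x : ℝ) : ℝ :=
  ((-1 : ℝ) ^ m / ((2 : ℝ) ^ l * (Nat.factorial l : ℝ))) * (1 - x ^ 2) ^ ((m : ℝ) / 2) *
    iteratedDeriv (m + l).toNat (fun y : ℝ => (y ^ 2 - 1) ^ l) x

/-- Complex spherical harmonic of degree `l` and order `m`. -/
def Ysph (l : ℕ) (m : ℤ) (θ φ : ℝ) : ℂ :=
  ((Real.sqrt ((2 * l + 1) / (4 * Real.pi) * (fact' ((l : ℤ) - m) / fact' ((l : ℤ) + m))) *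
      assocLegendre l m (Real.cos θ) : ℝ) : ℂ) * Complex.exp (Complex.I * m * φ)

/-- Real spherical harmonic of degree `l` and order `m`. -/
def Yre (l : ℕ) (m : ℤ) (θ φ : ℝ) : ℝ :=
  if m < 0 then
    (Complex.I / (Real.sqrt 2 : ℂ) * (Ysph l m θ φ - (-1 : ℂ) ^ m * Ysph l (-m) θ φ)).re
  else if m = 0 then (Ysph l 0 θ φ).re
  else ((1 / (Real.sqrt 2 : ℂ)) * (Ysph l (-m) θ φ + (-1 : ℂ) ^ m * Ysph l m θ φ)).re

/-- Integral over the unit sphere in spherical coordinates, `dS = sin θ dφ dθ`. -/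
def sphInt (f : ℝ → ℝ → ℝ) : ℝ :=
  ∫ θ in (0 : ℝ)..Real.pi, ∫ φ in (0 : ℝ)..(2 * Real.pi), f θ φ * Real.sin θ

end

/-!
The integral over the azimuth vanishes unless `m = n`, and then leaves the Gaunt integral
`∫ P_p P_k^m P_k^{-m}` over `[-1, 1]`. Write `R_{k,j}` for the `j`-th derivative of `(x² - 1)ᵏ`. By
Rodrigues' formula the Gaunt integral is a multiple of `T_i = ∫ R_{p,p} R_{k,i} R_{k,2k-i}` for
`i = k + m`. Legendre's operator `d/dx (x² - 1) d/dx` is self-adjoint, has `R_{p,p}` as an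
eigenvector and maps the products `R_{k,i} R_{k,2k-i}` to combinations of three neighbouring ones,
which gives a three-term recurrence for `T_i` in `i`. Racah's alternating sum satisfies the same
recurrence in `m`, by creative telescoping.

Since the coefficient of `T_{i-1}` vanishes at `i = 0`, only `T_0`, a multiple of the moment
`∫ R_{p,p} (x² - 1)ᵏ`, remains to be found. The same self-adjointness yields a first-order
recurrence of these moments in `k`, which Racah's sum at `m = 0` also satisfies. Starting from the
orthogonality relation `k = 0`, it determines them except at `p = 2k`, where `p` integrations by
parts give the value.
-/

open Polynomial

section Gaunt

open scoped Nat

/-! ### Racah sums -/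

/-- The reciprocal factorial `1 / z!`, equal to `0` at negative integers like the entire function
`1 / Γ(z + 1)`; hence `invFact_sub_one` holds at every integer. -/
noncomputable def invFact (z : ℤ) : ℝ := (fact' z)⁻¹

lemma fact'_natCast (n : ℕ) : fact' n = n ! := by
  simp [fact']

lemma fact'_of_neg {z : ℤ} (hz : z < 0) : fact' z = 0 := by
  simp [fact', hz]

lemma fact'_nonneg (z : ℤ) : 0 ≤ fact' z := by
  unfold fact'
  split_ifs <;> positivity

lemma invFact_natCast (n : ℕ) : invFact n = (n ! : ℝ)⁻¹ := by
  rw [invFact, fact'_natCast]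

lemma invFact_zero : invFact 0 = 1 := by
  simpa using invFact_natCast 0

lemma invFact_of_neg {z : ℤ} (hz : z < 0) : invFact z = 0 := by
  rw [invFact, fact'_of_neg hz, inv_zero]

lemma invFact_sub_one (z : ℤ) : invFact (z - 1) = z * invFact z := by
  rcases lt_trichotomy z 0 with hz | rfl | hz
  · rw [invFact_of_neg hz, invFact_of_neg (by lia), mul_zero]
  · rw [invFact_of_neg (by lia), Int.cast_zero, zero_mul]
  · obtain ⟨n, rfl⟩ : ∃ n : ℕ, z = (n + 1 : ℕ) := ⟨(z - 1).toNat, by lia⟩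
    rw [invFact_natCast, Nat.cast_succ, add_sub_cancel_right, invFact_natCast, Nat.factorial_succ]
    push_cast
    field_simp

lemma invFact_eq_mul_invFact_add_one (z : ℤ) : invFact z = (z + 1) * invFact (z + 1) := by
  simpa using invFact_sub_one (z + 1)

/-- The summand of Racah's formula for `(p k k; 0 m -m)`, with `a = k - p - m` and `b = k + m`. -/
noncomputable def racahTerm (p : ℕ) (a b : ℤ) (t : ℕ) : ℝ :=
  (-1) ^ t * invFact t ^ 2 * invFact (p - t) ^ 2 * invFact (a + t) * invFact (b - t)

/-- The alternating sum in Racah's formula for `(p k k; 0 m -m)`. -/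
noncomputable def racahSum (p k : ℕ) (m : ℤ) : ℝ :=
  ∑ t ∈ Finset.range (p + 1), racahTerm p (k - p - m) (k + m) t

lemma racahTerm_sub_one_left (p : ℕ) (a b : ℤ) (t : ℕ) :
    racahTerm p (a - 1) b t = (a + t) * racahTerm p a b t := by
  rw [racahTerm, racahTerm, sub_add_eq_add_sub, invFact_sub_one]
  push_cast
  ring

lemma racahTerm_sub_one_right (p : ℕ) (a b : ℤ) (t : ℕ) :
    racahTerm p a (b - 1) t = (b - t) * racahTerm p a b t := by
  rw [racahTerm, racahTerm, sub_right_comm, invFact_sub_one]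
  push_cast
  ring

lemma racahTerm_succ (p : ℕ) (a b : ℤ) (t : ℕ) :
    (t + 1) ^ 2 * (a + (t + 1)) * racahTerm p a b (t + 1) =
      -((p - t) ^ 2 * (b - t) * racahTerm p a b t) := by
  have ht := invFact_eq_mul_invFact_add_one t
  have hpt := invFact_sub_one (p - t)
  have hat := invFact_eq_mul_invFact_add_one (a + t)
  have hbt := invFact_sub_one (b - t)
  simp only [racahTerm]
  push_cast at ht hpt hat hbt ⊢
  rw [← sub_sub (p : ℤ), ← sub_sub b, ← add_assoc a, hpt, hbt, ht, hat]
  ring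

lemma racahTerm_eq_zero_of_lt {p : ℕ} {a b : ℤ} {t : ℕ} (ht : p < t) : racahTerm p a b t = 0 := by
  rw [racahTerm, invFact_of_neg (z := p - t) (by lia)]
  ring

lemma racahTerm_eq_zero_of_add_neg {p : ℕ} {a b : ℤ} {t : ℕ} (h : a + t < 0) :
    racahTerm p a b t = 0 := by
  rw [racahTerm, invFact_of_neg h, mul_zero, zero_mul]

lemma racahTerm_eq_zero_of_sub_neg {p : ℕ} {a b : ℤ} {t : ℕ} (h : b - t < 0) :
    racahTerm p a b t = 0 := by
  rw [racahTerm, invFact_of_neg h, mul_zero]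

lemma sum_racahTerm_telescope (p : ℕ) (a b : ℤ) :
    ∑ t ∈ Finset.range (p + 1),
      ((p - t : ℝ) ^ 2 * (b - t) + t ^ 2 * (a + t)) * racahTerm p a b t = 0 := by
  let G : ℕ → ℝ := fun t ↦ -(t ^ 2 * (a + t) * racahTerm p a b t)
  have hG (t : ℕ) : ((p - t : ℝ) ^ 2 * (b - t) + t ^ 2 * (a + t)) * racahTerm p a b t =
      G (t + 1) - G t := by
    simp only [G]
    push_cast
    rw [racahTerm_succ]
    ring
  rw [Finset.sum_congr rfl fun t _ ↦ hG t, Finset.sum_range_sub]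
  simp [G, racahTerm_eq_zero_of_lt]

lemma racahSum_recurrence (p k : ℕ) (m : ℤ) :
    ((p : ℝ) * (p + 1) - (k - m) * (k + m + 1) - (k - m + 1) * (k + m)) * racahSum p k m +
      (k + m + 1) ^ 2 * racahSum p k (m + 1) + (k - m + 1) ^ 2 * racahSum p k (m - 1) = 0 := by
  set a : ℤ := k - p - m + 1 with ha
  set b : ℤ := k + m + 1 with hb
  -- Over `racahTerm p a b`, the recurrence is `2k - p + 1` times the telescoping sum.
  have telescope := congrArg ((2 * k - p + 1 : ℝ) * ·) (sum_racahTerm_telescope p a b)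
  have lower_left : (k : ℤ) - p - m = a - 1 ∧ (k : ℤ) - p - (m + 1) = a - 1 - 1 ∧
      (k : ℤ) - p - (m - 1) = a := by lia
  have lower_right : (k : ℤ) + m = b - 1 ∧ (k : ℤ) + (m + 1) = b ∧
      (k : ℤ) + (m - 1) = b - 1 - 1 := by lia
  simp only [mul_zero, Finset.mul_sum] at telescope
  simp only [racahSum, lower_left, lower_right, racahTerm_sub_one_left, racahTerm_sub_one_right,
    Finset.mul_sum, ← Finset.sum_add_distrib]
  rw [← telescope]
  refine Finset.sum_congr rfl fun t _ ↦ ?_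
  rw [ha, hb]
  push_cast
  ring

lemma racahSum_zero_recurrence (p k : ℕ) :
    (2 * (k : ℝ) + 2 - p) * (k + 1) ^ 2 * racahSum p (k + 1) 0 =
      (2 * k + 2 + p) * racahSum p k 0 := by
  set a : ℤ := k - p + 1 with ha
  set b : ℤ := k + 1 with hb
  have shift_left : ((k + 1 : ℕ) : ℤ) - p - 0 = a ∧ (k : ℤ) - p - 0 = a - 1 := by lia
  have shift_right : ((k + 1 : ℕ) : ℤ) + 0 = b ∧ (k : ℤ) + 0 = b - 1 := by lia
  simp only [racahSum, shift_left, shift_right, racahTerm_sub_one_left, racahTerm_sub_one_right]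
  rw [← sub_eq_zero, ← sum_racahTerm_telescope p a b]
  simp only [Finset.mul_sum, ← Finset.sum_sub_distrib]
  refine Finset.sum_congr rfl fun t _ ↦ ?_
  rw [ha, hb]
  push_cast
  ring

lemma racahSum_neg_self (p k : ℕ) :
    racahSum p k (-k) = invFact p ^ 2 * invFact (2 * k - p) := by
  rw [racahSum, Finset.sum_eq_single 0]
  · have : (k : ℤ) - p - -k = 2 * k - p := by ring
    simp [racahTerm, this, invFact_zero]
  · intro t _ ht
    exact racahTerm_eq_zero_of_sub_neg (by lia)
  · simp

lemma racahSum_two_mul_self_zero (s : ℕ) : racahSum (2 * s) s 0 = (-1) ^ s * invFact s ^ 4 := by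
  rw [racahSum, Finset.sum_eq_single s]
  · have h₁ : ((2 * s : ℕ) : ℤ) - s = s := by lia
    have h₂ : (s : ℤ) - (2 * s : ℕ) - 0 + s = 0 := by lia
    have h₃ : (s : ℤ) + 0 - s = 0 := by lia
    rw [racahTerm, h₁, h₂, h₃, invFact_zero]
    ring
  · intro t _ ht
    rcases lt_or_gt_of_ne ht with h | h
    · exact racahTerm_eq_zero_of_add_neg (by lia)
    · exact racahTerm_eq_zero_of_sub_neg (by lia)
  · exact fun hs ↦ absurd (Finset.mem_range.2 (by lia)) hs

lemma racahSum_eq_zero {p k : ℕ} (h : 2 * k < p) (m : ℤ) : racahSum p k m = 0 := by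
  refine Finset.sum_eq_zero fun t _ ↦ ?_
  rcases lt_or_ge ((k : ℤ) - p - m + t) 0 with ht | ht
  · exact racahTerm_eq_zero_of_add_neg ht
  · exact racahTerm_eq_zero_of_sub_neg (by lia)

lemma racahSum_eq_zero_of_add_neg {p k : ℕ} {m : ℤ} (h : k + m < 0) : racahSum p k m = 0 :=
  Finset.sum_eq_zero fun _ _ ↦ racahTerm_eq_zero_of_sub_neg (by lia)

/-! ### Derivatives of `(X² - 1)ᵏ` -/

/-- The `j`-th derivative of `(X² - 1)ᵏ`. Up to the factor `2ᵏ k!`, this is the Legendre polynomial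
of degree `k` for `j = k` and the polynomial part of `P_k^m` for `j = k + m`. -/
noncomputable def rodrigues (R : Type*) [CommRing R] (k j : ℕ) : R[X] :=
  derivative^[j] ((X ^ 2 - 1) ^ k)

/-- Legendre's operator `d/dx (x² - 1) d/dx`, whose eigenvectors are the Legendre polynomials. -/
noncomputable def legendreOp {R : Type*} [CommRing R] (f : R[X]) : R[X] :=
  derivative ((X ^ 2 - 1) * derivative f)

section CommRing

variable (R : Type*) [CommRing R]

lemma rodrigues_zero_right (k : ℕ) : rodrigues R k 0 = (X ^ 2 - 1) ^ k := rfl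

lemma rodrigues_zero_zero : rodrigues R 0 0 = 1 := by
  simp [rodrigues]

lemma derivative_rodrigues (k j : ℕ) : derivative (rodrigues R k j) = rodrigues R k (j + 1) :=
  (Function.iterate_succ_apply' ..).symm

lemma iterate_derivative_rodrigues (k i j : ℕ) :
    derivative^[i] (rodrigues R k j) = rodrigues R k (i + j) :=
  (Function.iterate_add_apply ..).symm

lemma natCast_mul_derivative_rodrigues_pred (k j : ℕ) :
    (j : R[X]) * derivative (rodrigues R k (j - 1)) = j * rodrigues R k j := by
  cases j with
  | zero => simp
  | succ j => rw [derivative_rodrigues, Nat.add_sub_cancel]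

lemma rodrigues_one (k : ℕ) :
    (X ^ 2 - 1) * rodrigues R k 1 = 2 * (k : R[X]) * X * rodrigues R k 0 := by
  cases k with
  | zero => simp [rodrigues]
  | succ k =>
    simp only [← derivative_rodrigues R _ 0, rodrigues_zero_right, derivative_pow_succ,
      derivative_sub, derivative_X, derivative_one, map_add, map_natCast, map_one]
    push_cast
    ring

lemma rodrigues_add_two (k j : ℕ) :
    (X ^ 2 - 1) * rodrigues R k (j + 2) =
      2 * ((k : R[X]) - (j : R[X]) - 1) * X * rodrigues R k (j + 1) +
        ((j : R[X]) + 1) * (2 * (k : R[X]) - (j : R[X])) * rodrigues R k j := by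
  induction j with
  | zero =>
    have h := congrArg derivative (rodrigues_one R k)
    simp only [derivative_mul, derivative_rodrigues, derivative_sub, derivative_X_pow,
      derivative_one, derivative_X, derivative_natCast, derivative_ofNat, map_natCast,
      zero_add] at h ⊢
    push_cast at h ⊢
    linear_combination h
  | succ j ih =>
    have h := congrArg derivative ih
    simp only [derivative_mul, derivative_add, derivative_rodrigues, derivative_sub,
      derivative_X_pow, derivative_one, derivative_X, derivative_natCast, derivative_ofNat,
      map_natCast] at h ⊢
    push_cast at h ⊢
    linear_combination h

-- The truncated index `j - 1` is harmless at `j = 0`, as its term carries the factor `j`.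
lemma rodrigues_succ (k j : ℕ) :
    (X ^ 2 - 1) * rodrigues R k (j + 1) =
      2 * ((k : R[X]) - (j : R[X])) * X * rodrigues R k j +
        (j : R[X]) * (2 * (k : R[X]) - (j : R[X]) + 1) * rodrigues R k (j - 1) := by
  cases j with
  | zero => rw [rodrigues_one]; push_cast; ring
  | succ j => rw [rodrigues_add_two, Nat.add_sub_cancel]; push_cast; ring

lemma rodrigues_two_mul_right (k : ℕ) : rodrigues R k (2 * k) = ((2 * k)! : R[X]) := by
  nontriviality R
  have monic : (X ^ 2 - 1 : R[X]).Monic := by monicity!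
  have natDegree_eq : ((X ^ 2 - 1 : R[X]) ^ k).natDegree = 2 * k := by
    rw [monic.natDegree_pow, mul_comm, show (X ^ 2 - 1 : R[X]).natDegree = 2 by compute_degree!]
  have natDegree_rodrigues : (rodrigues R k (2 * k)).natDegree = 0 :=
    Nat.le_zero.1 ((natDegree_iterate_derivative _ _).trans_eq (by rw [natDegree_eq, Nat.sub_self]))
  rw [eq_C_of_natDegree_eq_zero natDegree_rodrigues, rodrigues, coeff_iterate_derivative, zero_add,
    Nat.descFactorial_self, ← natDegree_eq, (monic.pow k).coeff_natDegree]
  simp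

lemma factorial_mul_rodrigues_sub [IsDomain R] [CharZero R] {k m : ℕ} (h : m ≤ k) :
    ((k + m)! : R[X]) * rodrigues R k (k - m) =
      ((k - m)! : R[X]) * ((X ^ 2 - 1) ^ m * rodrigues R k (k + m)) := by
  induction m using Nat.twoStepInduction with
  | zero => simp
  | one =>
    obtain ⟨k, rfl⟩ : ∃ d, k = d + 1 := ⟨k - 1, by lia⟩
    rw [pow_one, rodrigues_add_two, Nat.add_sub_cancel, Nat.factorial_succ (k + 1),
      Nat.factorial_succ k]
    push_cast
    ring
  | more m ih ih_succ =>
    obtain ⟨d, rfl⟩ : ∃ d, k = d + m + 2 := ⟨k - m - 2, by lia⟩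
    have ih := ih (by lia)
    have ih_succ := ih_succ (by lia)
    have ode_low := rodrigues_add_two R (d + m + 2) d
    have ode_high := rodrigues_add_two R (d + m + 2) (d + m + 2 + m)
    rw [show d + m + 2 - m = d + 1 + 1 by lia] at ih
    rw [show d + m + 2 - (m + 1) = d + 1 by lia, ← add_assoc] at ih_succ
    rw [show d + m + 2 - (m + 2) = d by lia, ← add_assoc _ m 2]
    simp only [Nat.factorial_succ] at ih ih_succ ⊢
    have hd : ((d + 1 : ℕ) : R[X]) ≠ 0 := Nat.cast_ne_zero.2 d.succ_ne_zero
    apply mul_left_cancel₀ hd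
    push_cast at ih ih_succ ode_low ode_high ⊢
    set y : R[X] := X ^ 2 - 1
    linear_combination (-((d + m + 2 + m)! * (d + m + 2 + m + 1) : R[X])) * ode_low +
      y * (d + m + 2 + m + 1) * ih - 2 * (m + 1) * X * ih_succ -
      (d + 1) * d ! * y ^ (m + 1) * ode_high

lemma legendreOp_rodrigues_self (p : ℕ) :
    legendreOp (rodrigues R p p) = (p * (p + 1) : ℕ) * rodrigues R p p := by
  have flux : (X ^ 2 - 1) * derivative (rodrigues R p p) =
      ((p + 1 : ℕ) : R[X]) * ((p : R[X]) * rodrigues R p (p - 1)) := by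
    rw [derivative_rodrigues, rodrigues_succ]
    push_cast
    ring
  rw [legendreOp, flux, derivative_natCast_mul, derivative_natCast_mul,
    natCast_mul_derivative_rodrigues_pred]
  push_cast
  ring

lemma legendreOp_rodrigues_succ_zero (k : ℕ) :
    legendreOp (rodrigues R (k + 1) 0) =
      (2 * (k + 1) * (2 * k + 3) : ℕ) * rodrigues R (k + 1) 0 +
        (4 * (k + 1) ^ 2 : ℕ) * rodrigues R k 0 := by
  rw [legendreOp, derivative_rodrigues, rodrigues_one]
  simp only [rodrigues_zero_right, derivative_mul, derivative_natCast, derivative_ofNat,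
    derivative_X, derivative_pow_succ, derivative_sub, derivative_one, map_add, map_natCast,
    map_one]
  push_cast
  ring

lemma legendreOp_rodrigues_mul_rodrigues {k i j : ℕ} (h : i + j = 2 * k) :
    legendreOp (rodrigues R k i * rodrigues R k j) =
      (i * (j + 1) + j * (i + 1) : ℕ) * (rodrigues R k i * rodrigues R k j) +
      (i * (j + 1) : ℕ) * (rodrigues R k (i - 1) * rodrigues R k (j + 1)) +
      (j * (i + 1) : ℕ) * (rodrigues R k (i + 1) * rodrigues R k (j - 1)) := by
  have hk : (i : R[X]) + j = 2 * k := by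
    exact_mod_cast congrArg (Nat.cast (R := R[X])) h
  have flux : (X ^ 2 - 1) * derivative (rodrigues R k i * rodrigues R k j) =
      ((j + 1 : ℕ) : R[X]) * (((i : R[X]) * rodrigues R k (i - 1)) * rodrigues R k j) +
      ((i + 1 : ℕ) : R[X]) * (rodrigues R k i * ((j : R[X]) * rodrigues R k (j - 1))) := by
    rw [derivative_mul, derivative_rodrigues, derivative_rodrigues]
    push_cast
    linear_combination rodrigues R k j * rodrigues_succ R k i +
      rodrigues R k i * rodrigues_succ R k j -
      (2 * X * rodrigues R k i * rodrigues R k j + i * rodrigues R k (i - 1) * rodrigues R k j +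
        j * rodrigues R k (j - 1) * rodrigues R k i) * hk
  rw [legendreOp, flux]
  simp only [derivative_add, derivative_natCast_mul,
    derivative_mul (f := _ * rodrigues R k (i - 1)), derivative_mul (f := rodrigues R k i),
    natCast_mul_derivative_rodrigues_pred, derivative_rodrigues R k i, derivative_rodrigues R k j]
  push_cast
  ring

end CommRing

lemma eval_rodrigues_eq_zero {R : Type*} [CommRing R] {k j : ℕ} (h : j < k) {x : R}
    (hx : x ^ 2 = 1) : (rodrigues R k j).eval x = 0 := by
  obtain ⟨q, hq⟩ := pow_sub_dvd_iterate_derivative_pow (X ^ 2 - 1 : R[X]) k j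
  simp [rodrigues, hq, hx, Nat.sub_ne_zero_of_lt h]

/-! ### The Gaunt integral -/

/-- The integral of a polynomial over `[-1, 1]`, as a linear functional. -/
noncomputable def polyIntegral : ℝ[X] →ₗ[ℝ] ℝ where
  toFun q := ∫ x in (-1 : ℝ)..1, q.eval x
  map_add' f g := by
    simp only [eval_add]
    exact intervalIntegral.integral_add (f.continuous.intervalIntegrable _ _)
      (g.continuous.intervalIntegrable _ _)
  map_smul' c f := by simp

lemma polyIntegral_apply (q : ℝ[X]) : polyIntegral q = ∫ x in (-1 : ℝ)..1, q.eval x := rfl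

lemma polyIntegral_natCast_mul (n : ℕ) (q : ℝ[X]) :
    polyIntegral (n * q) = n * polyIntegral q := by
  rw [← nsmul_eq_mul, map_nsmul, nsmul_eq_mul]

lemma polyIntegral_derivative (q : ℝ[X]) :
    polyIntegral (derivative q) = q.eval 1 - q.eval (-1) :=
  intervalIntegral.integral_eq_sub_of_hasDerivAt (fun x _ ↦ q.hasDerivAt x)
    ((derivative q).continuous.intervalIntegrable _ _)

lemma polyIntegral_mul_legendreOp (f g : ℝ[X]) :
    polyIntegral (f * legendreOp g) = polyIntegral (legendreOp f * g) := by
  have wronskian : f * legendreOp g - legendreOp f * g =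
      derivative ((X ^ 2 - 1) * (f * derivative g - derivative f * g)) := by
    simp only [legendreOp, derivative_mul, derivative_sub]
    ring
  rw [← sub_eq_zero, ← map_sub, wronskian, polyIntegral_derivative]
  simp

lemma polyIntegral_rodrigues_mul {n i : ℕ} (h : i ≤ n) (q : ℝ[X]) :
    polyIntegral (rodrigues ℝ n i * q) =
      (-1) ^ i * polyIntegral (rodrigues ℝ n 0 * derivative^[i] q) := by
  induction i generalizing q with
  | zero => simp
  | succ i ih =>
    have by_parts := polyIntegral_derivative (rodrigues ℝ n i * q)
    rw [derivative_mul, derivative_rodrigues, map_add, ih (by lia), eval_mul, eval_mul,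
      eval_rodrigues_eq_zero h (by norm_num), eval_rodrigues_eq_zero h (by norm_num)] at by_parts
    rw [Function.iterate_succ_apply, pow_succ]
    linarith

lemma polyIntegral_rodrigues_self_mul_eq_zero {p : ℕ} {q : ℝ[X]} (h : q.natDegree < p) :
    polyIntegral (rodrigues ℝ p p * q) = 0 := by
  rw [polyIntegral_rodrigues_mul le_rfl, iterate_derivative_eq_zero h, mul_zero, map_zero, mul_zero]

lemma polyIntegral_rodrigues_self_mul_zero_recurrence (p k : ℕ) :
    ((p : ℝ) - 2 * k - 2) * (p + 2 * k + 3) *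
        polyIntegral (rodrigues ℝ p p * rodrigues ℝ (k + 1) 0) =
      4 * (k + 1) ^ 2 * polyIntegral (rodrigues ℝ p p * rodrigues ℝ k 0) := by
  have h := polyIntegral_mul_legendreOp (rodrigues ℝ p p) (rodrigues ℝ (k + 1) 0)
  simp only [legendreOp_rodrigues_self, legendreOp_rodrigues_succ_zero, mul_add,
    mul_left_comm _ (Nat.cast _), mul_assoc (Nat.cast _) (rodrigues ℝ p p), map_add,
    polyIntegral_natCast_mul] at h
  push_cast at h
  linear_combination -h

lemma polyIntegral_rodrigues_zero (n : ℕ) :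
    polyIntegral (rodrigues ℝ n 0) = (-1) ^ n * 2 ^ (2 * n + 1) * n ! ^ 2 / (2 * n + 1)! := by
  induction n with
  | zero => norm_num [rodrigues_zero_zero, polyIntegral_apply]
  | succ n ih =>
    have h := polyIntegral_rodrigues_self_mul_zero_recurrence 0 n
    rw [rodrigues_zero_zero, one_mul, one_mul, ih] at h
    rw [show 2 * (n + 1) + 1 = 2 * n + 1 + 1 + 1 by ring, Nat.factorial_succ (2 * n + 1 + 1),
      Nat.factorial_succ (2 * n + 1), Nat.factorial_succ n]
    push_cast at h ⊢
    have coeff_ne_zero : (2 * (n : ℝ) + 2) * (2 * n + 3) ≠ 0 := by positivity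
    apply mul_left_cancel₀ coeff_ne_zero
    field_simp at h ⊢
    linear_combination -h

lemma polyIntegral_rodrigues_two_mul_self_mul_zero (s : ℕ) :
    polyIntegral (rodrigues ℝ (2 * s) (2 * s) * rodrigues ℝ s 0) =
      2 ^ (4 * s + 1) * (2 * s)! ^ 3 / (4 * s + 1)! := by
  rw [polyIntegral_rodrigues_mul le_rfl, iterate_derivative_rodrigues, add_zero,
    rodrigues_two_mul_right, mul_comm (rodrigues _ _ _), polyIntegral_natCast_mul,
    polyIntegral_rodrigues_zero, (even_two_mul s).neg_one_pow, show 2 * (2 * s) = 4 * s by ring]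
  ring

/-- The closed form of the integral over `[-1, 1]` of `(x² - 1)ᵏ` against the `p`-th derivative of
`(x² - 1)ᵖ`, that is, of the moment `2ᵖ p! ∫ P_p (x² - 1)ᵏ` of a Legendre polynomial. The Racah sum
stands in for a product formula that would distinguish the parities of `p`. -/
noncomputable def legendreMoment (p k : ℕ) : ℝ :=
  (-1) ^ k * 2 ^ (p + 1) * p ! ^ 3 * 4 ^ k * k ! ^ 4 / (2 * k + p + 1)! * racahSum p k 0

lemma legendreMoment_recurrence (p k : ℕ) :
    ((p : ℝ) - 2 * k - 2) * (p + 2 * k + 3) * legendreMoment p (k + 1) =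
      4 * (k + 1) ^ 2 * legendreMoment p k := by
  have h := racahSum_zero_recurrence p k
  rw [legendreMoment, legendreMoment, show 2 * (k + 1) + p + 1 = 2 * k + p + 1 + 1 + 1 by ring,
    Nat.factorial_succ (2 * k + p + 1 + 1), Nat.factorial_succ (2 * k + p + 1),
    Nat.factorial_succ k]
  push_cast
  field_simp
  linear_combination 4 * (-1) ^ k * 4 ^ k * (2 * k + p + 3) * h

lemma legendreMoment_two_mul_self (s : ℕ) :
    legendreMoment (2 * s) s = 2 ^ (4 * s + 1) * (2 * s)! ^ 3 / (4 * s + 1)! := by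
  have four_pow : (4 : ℝ) ^ s = 2 ^ (2 * s) := by rw [pow_mul]; norm_num
  have sign_sq : ((-1 : ℝ) ^ s) ^ 2 = 1 := by rw [pow_right_comm, neg_one_sq, one_pow]
  rw [legendreMoment, racahSum_two_mul_self_zero, invFact_natCast, four_pow,
    show 2 * s + 2 * s + 1 = 4 * s + 1 by ring, show 4 * s + 1 = 2 * s + 1 + 2 * s by ring,
    pow_add]
  field_simp
  linear_combination 2 ^ (4 * s + 1) * sign_sq

lemma polyIntegral_rodrigues_self_mul_zero (p k : ℕ) :
    polyIntegral (rodrigues ℝ p p * rodrigues ℝ k 0) = legendreMoment p k := by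
  have middle (s : ℕ) : polyIntegral (rodrigues ℝ (2 * s) (2 * s) * rodrigues ℝ s 0) =
      legendreMoment (2 * s) s := by
    rw [polyIntegral_rodrigues_two_mul_self_mul_zero, legendreMoment_two_mul_self]
  induction k with
  | zero =>
    rcases Nat.eq_zero_or_pos p with rfl | hp
    · exact middle 0
    · rw [legendreMoment, racahSum_eq_zero (by lia), mul_zero, rodrigues_zero_zero,
        polyIntegral_rodrigues_self_mul_eq_zero (by simpa)]
  | succ k ih =>
    rcases eq_or_ne p (2 * (k + 1)) with rfl | hp
    · exact middle (k + 1)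
    · have factor_ne_zero : (p : ℝ) - 2 * k - 2 ≠ 0 := by
        rw [sub_sub, sub_ne_zero]
        exact_mod_cast hp
      have coeff_ne_zero : ((p : ℝ) - 2 * k - 2) * (p + 2 * k + 3) ≠ 0 :=
        mul_ne_zero factor_ne_zero (by positivity)
      apply mul_left_cancel₀ coeff_ne_zero
      rw [polyIntegral_rodrigues_self_mul_zero_recurrence, legendreMoment_recurrence, ih]

lemma eq_on_antidiagonal_of_recurrence {R : Type*} [Semiring R] [IsLeftCancelMulZero R]
    {a b c u v : ℕ → ℕ → R} {N : ℕ} (ha : ∀ i j, a i j ≠ 0) (hc : ∀ j, c 0 j = 0)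
    (hu : ∀ i j, i + j + 1 = N →
      a i j * u (i + 1) j = b i j * u i (j + 1) + c i j * u (i - 1) (j + 2))
    (hv : ∀ i j, i + j + 1 = N →
      a i j * v (i + 1) j = b i j * v i (j + 1) + c i j * v (i - 1) (j + 2))
    (h₀ : u 0 N = v 0 N) {i j : ℕ} (hij : i + j = N) : u i j = v i j := by
  induction i using Nat.strong_induction_on generalizing j with
  | _ i ih =>
    rcases i with _ | _ | i
    · rwa [← hij, zero_add] at h₀
    · apply mul_left_cancel₀ (ha 0 j)
      rw [hu 0 j (by lia), hv 0 j (by lia), ih 0 (by lia) (by lia), hc, zero_mul, zero_mul]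
    · apply mul_left_cancel₀ (ha (i + 1) j)
      rw [hu _ _ (by lia), hv _ _ (by lia), ih (i + 1) (by lia) (by lia), Nat.add_sub_cancel,
        ih i (by lia) (by lia)]

lemma polyIntegral_rodrigues_triple_recurrence (p : ℕ) {k i j : ℕ} (h : i + j + 1 = 2 * k) :
    ((j : ℝ) + 1) * (i + 1) *
        polyIntegral (rodrigues ℝ p p * (rodrigues ℝ k (i + 1) * rodrigues ℝ k j)) =
      ((p : ℝ) * (p + 1) - (j + 1) * (i + 1) - (j + 2) * i) *
        polyIntegral (rodrigues ℝ p p * (rodrigues ℝ k i * rodrigues ℝ k (j + 1))) +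
      -(i * (j + 2)) *
        polyIntegral (rodrigues ℝ p p * (rodrigues ℝ k (i - 1) * rodrigues ℝ k (j + 2))) := by
  have h := polyIntegral_mul_legendreOp (rodrigues ℝ p p)
    (rodrigues ℝ k i * rodrigues ℝ k (j + 1))
  simp only [legendreOp_rodrigues_self,
    legendreOp_rodrigues_mul_rodrigues ℝ (k := k) (i := i) (j := j + 1) (by lia), mul_add,
    mul_left_comm _ (Nat.cast _), mul_assoc (Nat.cast _) (rodrigues ℝ p p), map_add,
    polyIntegral_natCast_mul, Nat.add_sub_cancel] at h
  push_cast at h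
  linear_combination h

lemma racahSum_sub_recurrence (p : ℕ) {k i j : ℕ} (h : i + j + 1 = 2 * k) :
    ((j : ℝ) + 1) * (i + 1) * ((-1) ^ (i + 1) * (i + 1)! * j ! * racahSum p k ((i + 1 : ℕ) - k)) =
      ((p : ℝ) * (p + 1) - (j + 1) * (i + 1) - (j + 2) * i) *
        ((-1) ^ i * i ! * (j + 1)! * racahSum p k (i - k)) +
      -(i * (j + 2)) *
        ((-1) ^ (i - 1) * (i - 1)! * (j + 2)! * racahSum p k ((i - 1 : ℕ) - k)) := by
  have hk : (i : ℝ) + j + 1 = 2 * k := by exact_mod_cast h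
  have three_term := racahSum_recurrence p k (i - k)
  have lower_term : -(i * (j + 2) : ℝ) *
      ((-1) ^ (i - 1) * (i - 1)! * (j + 2)! * racahSum p k ((i - 1 : ℕ) - k)) =
        (-1) ^ i * i ! * (j + 1)! * ((j + 2) ^ 2 * racahSum p k (i - k - 1)) := by
    rcases i with _ | i
    · rw [racahSum_eq_zero_of_add_neg (m := (0 : ℕ) - k - 1) (by lia)]
      simp
    · rw [Nat.add_sub_cancel, Nat.factorial_succ i, Nat.factorial_succ (j + 1),
        show ((i + 1 : ℕ) : ℤ) - k - 1 = i - k by lia]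
      push_cast
      ring
  have left : (k : ℝ) - ((i - k : ℤ) : ℝ) = j + 1 := by push_cast; linarith
  have right : (k : ℝ) + ((i - k : ℤ) : ℝ) = i := by push_cast; ring
  rw [left, right] at three_term
  rw [lower_term, Nat.factorial_succ i, Nat.factorial_succ j, Nat.cast_succ i, add_sub_right_comm]
  push_cast
  linear_combination -((-1) ^ i * i ! * (j + 1) * j ! : ℝ) * three_term

lemma polyIntegral_rodrigues_triple (p : ℕ) {k i j : ℕ} (h : i + j = 2 * k) :
    polyIntegral (rodrigues ℝ p p * (rodrigues ℝ k i * rodrigues ℝ k j)) =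
      legendreMoment p k * p ! ^ 2 * fact' (2 * k - p) *
        ((-1) ^ i * i ! * j ! * racahSum p k (i - k)) := by
  refine eq_on_antidiagonal_of_recurrence (R := ℝ) (N := 2 * k)
    (u := fun i j ↦ polyIntegral (rodrigues ℝ p p * (rodrigues ℝ k i * rodrigues ℝ k j)))
    (v := fun i j ↦ legendreMoment p k * p ! ^ 2 * fact' (2 * k - p) *
        ((-1) ^ i * i ! * j ! * racahSum p k (i - k)))
    (a := fun i j ↦ (j + 1) * (i + 1))
    (b := fun i j ↦ p * (p + 1) - (j + 1) * (i + 1) - (j + 2) * i)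
    (c := fun i j ↦ -(i * (j + 2))) (fun i j ↦ by positivity) (by simp)
    (fun i j hij ↦ polyIntegral_rodrigues_triple_recurrence p hij) (fun i j hij ↦ ?_) ?_ h
  · linear_combination legendreMoment p k * p ! ^ 2 * fact' (2 * k - p) *
      racahSum_sub_recurrence p hij
  · rw [rodrigues_two_mul_right, mul_comm (rodrigues ℝ k 0), mul_left_comm,
      polyIntegral_natCast_mul, polyIntegral_rodrigues_self_mul_zero]
    rcases lt_or_ge (2 * k) p with hp | hp
    · simp [legendreMoment, racahSum_eq_zero hp]
    · obtain ⟨d, hd⟩ := Nat.exists_eq_add_of_le hp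
      have : (2 * k - p : ℤ) = d := by lia
      rw [Nat.cast_zero, zero_sub, racahSum_neg_self, this, invFact_natCast, invFact_natCast,
        fact'_natCast, Nat.factorial_zero]
      push_cast
      field_simp


/-- The triangle coefficient `Δ(p k k)` of the theory of angular momentum, which vanishes if `p`,
`k`, `k` violate the triangle inequality. -/
noncomputable def triangleCoeff (p k : ℕ) : ℝ :=
  p ! ^ 2 * fact' (2 * k - p) / (2 * k + p + 1)!

lemma triangleCoeff_nonneg (p k : ℕ) : 0 ≤ triangleCoeff p k := by
  have := fact'_nonneg (2 * k - p)
  rw [triangleCoeff]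
  positivity

lemma w3j_sum_eq_racahSum (p k : ℕ) (m : ℤ) :
    ∑ t ∈ Finset.range (p + k + k + 1),
        (-1 : ℝ) ^ t /
          (fact' t * fact' ((k : ℤ) - k + 0 + t) * fact' ((k : ℤ) - p - m + t) *
            fact' ((p : ℤ) + k - k - t) * fact' ((p : ℤ) - 0 - t) * fact' ((k : ℤ) + m - t)) =
      racahSum p k m := by
  have summand (t : ℕ) : (-1 : ℝ) ^ t /
      (fact' t * fact' ((k : ℤ) - k + 0 + t) * fact' ((k : ℤ) - p - m + t) *
        fact' ((p : ℤ) + k - k - t) * fact' ((p : ℤ) - 0 - t) * fact' ((k : ℤ) + m - t)) =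
      racahTerm p (k - p - m) (k + m) t := by
    simp only [sub_self, add_zero, zero_add, add_sub_cancel_right, sub_zero, racahTerm, invFact,
      div_eq_mul_inv, mul_inv]
    ring
  simp only [summand]
  refine (Finset.sum_subset (Finset.range_subset_range.2 (by lia)) fun t _ ht ↦ ?_).symm
  exact racahTerm_eq_zero_of_lt (by simpa using ht)

lemma sqrt_w3j_radicand (p k : ℕ) (m : ℤ) :
    √((fact' ((p : ℤ) + k - k) * fact' ((p : ℤ) - k + k) * fact' (-(p : ℤ) + k + k) *
        fact' ((p : ℤ) - 0) * fact' ((p : ℤ) + 0) * fact' ((k : ℤ) - m) * fact' ((k : ℤ) + m) *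
        fact' ((k : ℤ) - -m) * fact' ((k : ℤ) + -m)) / fact' ((p : ℤ) + k + k + 1)) =
      √(triangleCoeff p k) * (p ! * fact' (k - m) * fact' (k + m)) := by
  have hm : 0 ≤ p ! * fact' (k - m) * fact' (k + m) :=
    mul_nonneg (mul_nonneg (by positivity) (fact'_nonneg _)) (fact'_nonneg _)
  rw [← Real.sqrt_sq hm, ← Real.sqrt_mul (triangleCoeff_nonneg p k), add_sub_cancel_right,
    sub_add_cancel, sub_zero, add_zero, sub_neg_eq_add, ← sub_eq_add_neg,
    show (p : ℤ) + k + k + 1 = (2 * k + p + 1 : ℕ) by lia,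
    show -(p : ℤ) + k + k = 2 * k - p by ring, fact'_natCast, fact'_natCast, triangleCoeff]
  congr 1
  ring

lemma neg_one_zpow_w3j_phase (p k : ℕ) (m : ℤ) :
    (-1 : ℝ) ^ ((p : ℤ) - k - -m) = (-1) ^ (p + k) * (-1) ^ m := by
  have h : (p : ℤ) - k - -m = (p + k : ℕ) + m + 2 * -k := by push_cast; ring
  rw [h, zpow_add₀ (by norm_num), zpow_add₀ (by norm_num), zpow_natCast,
    (even_two_mul (-k : ℤ)).neg_one_zpow, mul_one]

lemma w3j_eq (p : ℕ) {k : ℕ} {m : ℤ} (hm : |m| ≤ k) :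
    w3j p k k 0 m (-m) = (-1) ^ (p + k) * (-1) ^ m *
      (√(triangleCoeff p k) * (p ! * fact' (k - m) * fact' (k + m))) * racahSum p k m := by
  rcases lt_or_ge (2 * k) p with hp | hp
  · rw [racahSum_eq_zero hp, mul_zero, w3j, if_neg]
    rintro ⟨-, -, -, -, -, triangle⟩
    have := abs_le.1 triangle
    lia
  · have triangle : |(p : ℤ) - k| ≤ k := abs_le.2 ⟨by lia, by lia⟩
    rw [w3j, if_pos ⟨by ring, by simp, hm, by rwa [abs_neg], by lia, triangle⟩,
      w3j_sum_eq_racahSum, sqrt_w3j_radicand, neg_one_zpow_w3j_phase]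

lemma w3j_mul_w3j (p : ℕ) {k m : ℕ} (h : m ≤ k) :
    w3j p k k 0 0 0 * w3j p k k 0 m (-m) =
      triangleCoeff p k * p ! ^ 2 * k ! ^ 2 * racahSum p k 0 *
        ((-1) ^ m * (k + m)! * (k - m)! * racahSum p k m) := by
  have h₀ := w3j_eq p (k := k) (m := 0) (by simp)
  have sub_eq : (k : ℤ) - m = (k - m : ℕ) := by lia
  have sign_sq : (-1 : ℝ) ^ (p + k) * (-1) ^ (p + k) = 1 :=
    pow_mul_pow_eq_one _ (by norm_num)
  rw [neg_zero, sub_zero, add_zero, fact'_natCast, zpow_zero] at h₀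
  rw [h₀, w3j_eq p (by simpa using h), sub_eq, ← Nat.cast_add, fact'_natCast, fact'_natCast,
    zpow_natCast]
  linear_combination p ! ^ 2 * k ! ^ 2 * racahSum p k 0 *
    ((-1) ^ m * (k + m)! * (k - m)! * racahSum p k m) *
      (√(triangleCoeff p k) * √(triangleCoeff p k) * sign_sq +
        Real.mul_self_sqrt (triangleCoeff_nonneg p k))

lemma polyIntegral_rodrigues_triple_eq_w3j (p : ℕ) {k m : ℕ} (h : m ≤ k) :
    polyIntegral (rodrigues ℝ p p * (rodrigues ℝ k (k + m) * rodrigues ℝ k (k - m))) =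
      2 * (2 ^ p * p !) * (2 ^ k * k !) ^ 2 * (w3j p k k 0 0 0 * w3j p k k 0 m (-m)) := by
  have four_pow : (4 : ℝ) ^ k = (2 ^ k) ^ 2 := by rw [pow_right_comm]; norm_num
  have sign_sq : (-1 : ℝ) ^ k * (-1) ^ k = 1 := pow_mul_pow_eq_one _ (by norm_num)
  have order_eq : ((k + m : ℕ) : ℤ) - k = m := by lia
  rw [polyIntegral_rodrigues_triple p (by lia), w3j_mul_w3j p h, order_eq, legendreMoment,
    triangleCoeff, four_pow, pow_succ, pow_add]
  field_simp
  linear_combination racahSum p k 0 * fact' (2 * k - p) * racahSum p k m * sign_sq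

end Gaunt

/-! ### Spherical harmonics -/

section Legendre

open scoped Nat

lemma iteratedDeriv_eval {𝕜 : Type*} [NontriviallyNormedField 𝕜] (q : 𝕜[X]) (j : ℕ) :
    iteratedDeriv j q.eval = (derivative^[j] q).eval := by
  induction j with
  | zero => rw [iteratedDeriv_zero, Function.iterate_zero, id]
  | succ j ih =>
    ext x
    rw [iteratedDeriv_succ, ih, Polynomial.deriv, Function.iterate_succ_apply']

lemma assocLegendre_eq (l : ℕ) (m : ℤ) (x : ℝ) :
    assocLegendre l m x = (-1) ^ m / (2 ^ l * l !) * (1 - x ^ 2) ^ ((m : ℝ) / 2) *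
      (rodrigues ℝ l (m + l).toNat).eval x := by
  have base : (fun y : ℝ ↦ (y ^ 2 - 1) ^ l) = ((X ^ 2 - 1) ^ l : ℝ[X]).eval := by
    ext y
    simp
  rw [assocLegendre, base, iteratedDeriv_eval, rodrigues]

lemma factorial_mul_eval_rodrigues_sub {l m : ℕ} (h : m ≤ l) (x : ℝ) :
    (l + m)! * (rodrigues ℝ l (l - m)).eval x =
      (l - m)! * ((x ^ 2 - 1) ^ m * (rodrigues ℝ l (l + m)).eval x) := by
  simpa using congrArg (eval x) (factorial_mul_rodrigues_sub ℝ h)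

lemma factorial_mul_assocLegendre_neg {l m : ℕ} (h : m ≤ l) {x : ℝ} (hx : x ^ 2 ≤ 1) :
    (l + m)! * assocLegendre l (-m) x = (-1) ^ m * (l - m)! * assocLegendre l m x := by
  have reflect := factorial_mul_eval_rodrigues_sub h x
  have index_neg : (-(m : ℤ) + l).toNat = l - m := by lia
  have index_pos : ((m : ℤ) + l).toNat = l + m := by lia
  rcases m.eq_zero_or_pos with rfl | hm
  · simp
  have half_ne_zero : (m : ℝ) / 2 ≠ 0 := by positivity
  rw [assocLegendre_eq, assocLegendre_eq, index_neg, index_pos, zpow_neg, zpow_natCast,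
    ← inv_pow, inv_neg_one]
  push_cast
  rw [neg_div]
  rcases hx.eq_or_lt with hx | hx
  · rw [hx, sub_self, Real.zero_rpow half_ne_zero, Real.zero_rpow (neg_ne_zero.2 half_ne_zero)]
    ring
  · have hy : 0 < 1 - x ^ 2 := sub_pos.2 hx
    have rpow_neg_half : (1 - x ^ 2) ^ (-((m : ℝ) / 2)) * (1 - x ^ 2) ^ m =
        (1 - x ^ 2) ^ ((m : ℝ) / 2) := by
      rw [← Real.rpow_natCast _ m, ← Real.rpow_add hy]
      congr 1
      ring
    rw [← neg_sub (1 : ℝ), neg_pow] at reflect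
    rw [← rpow_neg_half]
    linear_combination (-1) ^ m / (2 ^ l * l !) * (1 - x ^ 2) ^ (-((m : ℝ) / 2)) * reflect

lemma assocLegendre_sq (l m : ℕ) {x : ℝ} (hx : x ^ 2 ≤ 1) :
    assocLegendre l m x ^ 2 =
      (1 - x ^ 2) ^ m * (rodrigues ℝ l (l + m)).eval x ^ 2 / (2 ^ l * l !) ^ 2 := by
  have rpow_sq : ((1 - x ^ 2) ^ ((m : ℝ) / 2)) ^ 2 = (1 - x ^ 2) ^ m := by
    rw [← Real.rpow_mul_natCast (sub_nonneg.2 hx), Nat.cast_ofNat, div_mul_cancel₀ _ two_ne_zero,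
      Real.rpow_natCast]
  have sign_sq : ((-1 : ℝ) ^ m) ^ 2 = 1 := by rw [pow_right_comm, neg_one_sq, one_pow]
  have index_eq : ((m : ℤ) + l).toNat = l + m := by lia
  rw [assocLegendre_eq, index_eq, Int.cast_natCast, zpow_natCast, mul_pow, mul_pow, div_pow,
    rpow_sq, sign_sq]
  ring

/-- The factor of the spherical harmonic `Y_l^m` that depends on the polar angle `θ` alone, that is,
the normalized associated Legendre function of `cos θ`. -/
noncomputable def polarPart (l : ℕ) (m : ℤ) (θ : ℝ) : ℝ :=
  √((2 * l + 1) / (4 * π) * (fact' (l - m) / fact' (l + m))) * assocLegendre l m (Real.cos θ)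

lemma polarPart_natCast {l m : ℕ} (h : m ≤ l) (θ : ℝ) :
    polarPart l m θ =
      √((2 * l + 1) / (4 * π) * ((l - m)! / (l + m)!)) * assocLegendre l m (Real.cos θ) := by
  rw [polarPart, ← Nat.cast_sub h, ← Nat.cast_add, fact'_natCast, fact'_natCast]

lemma polarPart_zero (l : ℕ) (θ : ℝ) :
    polarPart l 0 θ =
      √((2 * l + 1) / (4 * π)) / (2 ^ l * l !) * (rodrigues ℝ l l).eval (Real.cos θ) := by
  have h := polarPart_natCast l.zero_le θ
  rw [Nat.cast_zero, Nat.sub_zero, add_zero, div_self (by positivity), mul_one] at h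
  rw [h, assocLegendre_eq, zpow_zero, Int.cast_zero, zero_div, Real.rpow_zero, zero_add,
    Int.toNat_natCast]
  ring

lemma sqrt_mul_div_mul_comm {a b : ℝ} (ha : 0 < a) (hb : 0 < b) (c : ℝ) :
    √(c * (b / a)) * a = √(c * (a / b)) * b :=
  calc √(c * (b / a)) * a = √(c * (b / a) * a ^ 2) := by
        rw [Real.sqrt_mul' _ (sq_nonneg a), Real.sqrt_sq ha.le]
    _ = √(c * (a / b) * b ^ 2) := by congr 1; field_simp
    _ = √(c * (a / b)) * b := by rw [Real.sqrt_mul' _ (sq_nonneg b), Real.sqrt_sq hb.le]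

lemma polarPart_neg {l m : ℕ} (h : m ≤ l) (θ : ℝ) :
    polarPart l (-m) θ = (-1) ^ m * polarPart l m θ := by
  have reflect := factorial_mul_assocLegendre_neg h (Real.cos_sq_le_one θ)
  have norm_eq := sqrt_mul_div_mul_comm (Nat.cast_pos.2 (l + m).factorial_pos)
    (Nat.cast_pos.2 (l - m).factorial_pos) ((2 * l + 1) / (4 * π))
  rw [polarPart_natCast h, polarPart, sub_neg_eq_add, ← sub_eq_add_neg, ← Nat.cast_sub h,
    ← Nat.cast_add, fact'_natCast, fact'_natCast]
  apply mul_left_cancel₀ (Nat.cast_ne_zero.2 (l + m).factorial_ne_zero : ((l + m)! : ℝ) ≠ 0)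
  linear_combination √((2 * l + 1) / (4 * π) * ((l + m)! / (l - m)!)) * reflect -
    (-1) ^ m * assocLegendre l m (Real.cos θ) * norm_eq

lemma polarPart_sq {l m : ℕ} (h : m ≤ l) (θ : ℝ) :
    polarPart l m θ ^ 2 = (-1) ^ m * ((2 * l + 1) / (4 * π)) / (2 ^ l * l !) ^ 2 *
      (rodrigues ℝ l (l + m) * rodrigues ℝ l (l - m)).eval (Real.cos θ) := by
  have reflect := factorial_mul_eval_rodrigues_sub h (Real.cos θ)
  rw [← neg_sub (1 : ℝ), neg_pow] at reflect
  have sign_sq : ((-1 : ℝ) ^ m) ^ 2 = 1 := by rw [pow_right_comm, neg_one_sq, one_pow]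
  have reflect_div : (l - m)! / (l + m)! *
      ((1 - Real.cos θ ^ 2) ^ m * (rodrigues ℝ l (l + m)).eval (Real.cos θ)) =
        (-1) ^ m * (rodrigues ℝ l (l - m)).eval (Real.cos θ) := by
    field_simp
    linear_combination -(-1) ^ m * reflect - (l - m)! * (1 - Real.cos θ ^ 2) ^ m *
      (rodrigues ℝ l (l + m)).eval (Real.cos θ) * sign_sq
  rw [polarPart_natCast h, mul_pow, Real.sq_sqrt (by positivity),
    assocLegendre_sq l m (Real.cos_sq_le_one θ), eval_mul]
  linear_combination (2 * l + 1) / (4 * π) / (2 ^ l * l !) ^ 2 *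
    (rodrigues ℝ l (l + m)).eval (Real.cos θ) * reflect_div

lemma integral_comp_cos_mul_sin {g : ℝ → ℝ} (hg : Continuous g) :
    ∫ θ in (0 : ℝ)..π, g (Real.cos θ) * Real.sin θ = ∫ x in (-1 : ℝ)..1, g x := by
  have h := intervalIntegral.integral_comp_mul_deriv (a := 0) (b := π) (f := Real.cos)
    (f' := fun θ ↦ -Real.sin θ) (fun θ _ ↦ Real.hasDerivAt_cos θ) (by fun_prop) hg
  simp only [Function.comp, Real.cos_zero, Real.cos_pi, mul_neg,
    intervalIntegral.integral_neg] at h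
  rw [intervalIntegral.integral_symm 1 (-1), ← h, neg_neg]

lemma integral_polarPart_mul_sq (p : ℕ) {k m : ℕ} (h : m ≤ k) :
    ∫ θ in (0 : ℝ)..π, polarPart p 0 θ * polarPart k m θ ^ 2 * Real.sin θ =
      (2 * k + 1) / (2 * π) * √((2 * p + 1) / (4 * π)) * (-1) ^ m *
        (w3j p k k 0 0 0 * w3j p k k 0 m (-m)) := by
  have integrand (θ : ℝ) : polarPart p 0 θ * polarPart k m θ ^ 2 * Real.sin θ =
      √((2 * p + 1) / (4 * π)) / (2 ^ p * p !) *
        ((-1) ^ m * ((2 * k + 1) / (4 * π)) / (2 ^ k * k !) ^ 2) *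
        ((rodrigues ℝ p p * (rodrigues ℝ k (k + m) * rodrigues ℝ k (k - m))).eval (Real.cos θ) *
          Real.sin θ) := by
    rw [polarPart_zero, polarPart_sq h, eval_mul (p := rodrigues ℝ p p)]
    ring
  simp only [integrand]
  rw [intervalIntegral.integral_const_mul, integral_comp_cos_mul_sin (Polynomial.continuous _),
    ← polyIntegral_apply, polyIntegral_rodrigues_triple_eq_w3j p h]
  field_simp
  norm_num

end Legendre

lemma Ysph_re (l : ℕ) (m : ℤ) (θ φ : ℝ) :
    (Ysph l m θ φ).re = polarPart l m θ * Real.cos (m * φ) := by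
  rw [Ysph, Complex.re_ofReal_mul, ← polarPart]
  congr 1
  rw [show Complex.I * (m : ℂ) * φ = ((m * φ : ℝ) : ℂ) * Complex.I by push_cast; ring,
    Complex.exp_ofReal_mul_I_re]

lemma Yre_zero (l : ℕ) (θ φ : ℝ) : Yre l 0 θ φ = polarPart l 0 θ := by
  simp [Yre, Ysph_re]

lemma Yre_of_pos {l m : ℕ} (hm : 0 < m) (h : m ≤ l) (θ φ : ℝ) :
    Yre l m θ φ = √2 * (-1) ^ m * polarPart l m θ * Real.cos (m * φ) := by
  have sign : (-1 : ℂ) ^ (m : ℤ) = ((-1) ^ m : ℝ) := by push_cast; rw [zpow_natCast]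
  have norm : 1 / (√2 : ℂ) = ((1 / √2 : ℝ) : ℂ) := by push_cast; rfl
  have two_div : 2 / √2 = √2 := Real.div_sqrt
  rw [Yre, if_neg (by lia), if_neg (by lia), sign, norm, Complex.re_ofReal_mul, Complex.add_re,
    Complex.re_ofReal_mul, Ysph_re, Ysph_re, polarPart_neg h, Int.cast_neg, neg_mul, Real.cos_neg,
    Int.cast_natCast]
  linear_combination (-1) ^ m * polarPart l m θ * Real.cos (m * φ) * two_div

lemma integral_cos_intCast_mul {c : ℤ} (hc : c ≠ 0) :
    ∫ φ in (0 : ℝ)..2 * π, Real.cos (c * φ) = 0 := by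
  rw [intervalIntegral.integral_comp_mul_left _ (Int.cast_ne_zero.2 hc), integral_cos, mul_zero,
    Real.sin_zero, show (c : ℝ) * (2 * π) = (2 * c : ℤ) * π by push_cast; ring,
    Real.sin_int_mul_pi, sub_zero, smul_zero]

lemma integral_cos_mul_cos {m n : ℕ} (hm : 0 < m) :
    ∫ φ in (0 : ℝ)..2 * π, Real.cos (m * φ) * Real.cos (n * φ) = if m = n then π else 0 := by
  have product (φ : ℝ) : Real.cos (m * φ) * Real.cos (n * φ) =
      (Real.cos (((m - n : ℤ) : ℝ) * φ) + Real.cos (((m + n : ℤ) : ℝ) * φ)) / 2 := by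
    push_cast
    rw [sub_mul, add_mul, ← Real.two_mul_cos_mul_cos]
    ring
  simp only [product]
  rw [intervalIntegral.integral_div, intervalIntegral.integral_add
      ((by fun_prop : Continuous _).intervalIntegrable _ _)
      ((by fun_prop : Continuous _).intervalIntegrable _ _),
    integral_cos_intCast_mul (c := m + n) (by lia)]
  split_ifs with h
  · simp [h]
  · rw [integral_cos_intCast_mul (sub_ne_zero.2 (Nat.cast_injective.ne h)), add_zero, zero_div]

lemma sphInt_mul (f g : ℝ → ℝ) :
    sphInt (fun θ φ ↦ f θ * g φ) =
      (∫ θ in (0 : ℝ)..π, f θ * Real.sin θ) * ∫ φ in (0 : ℝ)..2 * π, g φ := by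
  simp only [sphInt, mul_right_comm _ (g _), intervalIntegral.integral_const_mul,
    intervalIntegral.integral_mul_const]

lemma sphInt_Yre_zero_mul_Yre_mul_Yre (p : ℕ) {k l m n : ℕ} (hm : 0 < m) (hmk : m ≤ k)
    (hn : 0 < n) (hnl : n ≤ l) :
    sphInt (fun θ φ ↦ Yre p 0 θ φ * Yre k m θ φ * Yre l n θ φ) =
      2 * (-1) ^ (m + n) *
        (∫ θ in (0 : ℝ)..π, polarPart p 0 θ * (polarPart k m θ * polarPart l n θ) * Real.sin θ) *
        if m = n then π else 0 := by
  have integrand (θ φ : ℝ) : Yre p 0 θ φ * Yre k m θ φ * Yre l n θ φ =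
      2 * (-1) ^ (m + n) * (polarPart p 0 θ * (polarPart k m θ * polarPart l n θ)) *
        (Real.cos (m * φ) * Real.cos (n * φ)) := by
    rw [Yre_zero, Yre_of_pos hm hmk, Yre_of_pos hn hnl, pow_add]
    linear_combination (-1) ^ m * (-1) ^ n * polarPart p 0 θ * polarPart k m θ * polarPart l n θ *
      Real.cos (m * φ) * Real.cos (n * φ) * Real.mul_self_sqrt zero_le_two
  simp only [integrand]
  rw [sphInt_mul, integral_cos_mul_cos hm]
  simp only [mul_assoc (2 * (-1) ^ (m + n) : ℝ), intervalIntegral.integral_const_mul]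

/-- For `m, n > 0`, `W^{p,k}_{0,m,n} = δ_{m,n} C_{p,k} (−1)^m (p k k; 0 0 0)(p k k; 0 m −m)`,
where `C_{p,k} = (2k+1)√(2p+1)/√(4π)`. -/
theorem tripleProduct_q_zero (p k : ℕ) (m n : ℤ)
    (hm : 0 < m) (hm' : m ≤ (k : ℤ)) (hn : 0 < n) (hn' : n ≤ (k : ℤ)) :
    sphInt (fun θ φ => Yre p 0 θ φ * Yre k m θ φ * Yre k n θ φ) =
      (if m = n then 1 else 0) *
        ((2 * (k : ℝ) + 1) * Real.sqrt (2 * p + 1) / Real.sqrt (4 * Real.pi)) *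
        (-1 : ℝ) ^ m * w3j p k k 0 0 0 * w3j p k k 0 m (-m) := by
  lift m to ℕ using hm.le
  lift n to ℕ using hn.le
  norm_cast at hm hm' hn hn'
  rw [sphInt_Yre_zero_mul_Yre_mul_Yre p hm hm' hn hn']
  simp only [Nat.cast_inj]
  split_ifs with hmn
  · subst hmn
    simp only [← pow_two]
    rw [integral_polarPart_mul_sq p hm', (Even.add_self m).neg_one_pow,
      Real.sqrt_div (by positivity), zpow_natCast]
    field_simp
  · simp
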